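/- (Confidentiality of the request in P1, req_notin_spies.) If evs ∈ p1, the event req A r n I B occurs in evs and A ∉ bad, then Nonce n ∉ analz (spies evs); i.e. the spy cannot obtain the session identifier n of an honest owner's agent. -/

import Mathlib

inductive agent : Type
  | Server : agent
  | Friend : ℕ → agent
  | Spy : agent
deriving DecidableEq

inductive msg : Type
  | Agent : agent → msg
  | Number : ℕ → msg
  | Nonce : ℕ → msg
  | Key : ℕ → msg
  | Hash : msg → msg
  | MPair : msg → msg → msg
  | Crypt : ℕ → msg → msg
deriving DecidableEq

inductive partsP (H : Set msg) : msg → Prop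
  | Inj : ∀ X, X ∈ H → partsP H X
  | Fst : ∀ X Y, partsP H (msg.MPair X Y) → partsP H X
  | Snd : ∀ X Y, partsP H (msg.MPair X Y) → partsP H Y
  | Body : ∀ K X, partsP H (msg.Crypt K X) → partsP H X

/-- `parts H`: sub-components of messages of `H`. -/
def parts (H : Set msg) : Set msg := {X | partsP H X}

inductive analzP (invKey : ℕ → ℕ) (H : Set msg) : msg → Prop
  | Inj : ∀ X, X ∈ H → analzP invKey H X
  | Fst : ∀ X Y, analzP invKey H (msg.MPair X Y) → analzP invKey H X
  | Snd : ∀ X Y, analzP invKey H (msg.MPair X Y) → analzP invKey H Y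
  | Decrypt : ∀ K X, analzP invKey H (msg.Crypt K X) →
      analzP invKey H (msg.Key (invKey K)) → analzP invKey H X

/-- `analz invKey H`: what can be obtained by decomposing and decrypting messages of `H`. -/
def analz (invKey : ℕ → ℕ) (H : Set msg) : Set msg := {X | analzP invKey H X}

inductive synthP (H : Set msg) : msg → Prop
  | Inj : ∀ X, X ∈ H → synthP H X
  | Ag : ∀ a, synthP H (msg.Agent a)
  | Num : ∀ n, synthP H (msg.Number n)
  | Hsh : ∀ X, synthP H X → synthP H (msg.Hash X)
  | Pr : ∀ X Y, synthP H X → synthP H Y → synthP H (msg.MPair X Y)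
  | Cry : ∀ K X, synthP H X → msg.Key K ∈ H → synthP H (msg.Crypt K X)

/-- `synth H`: messages that can be synthesized from `H`. -/
def synth (H : Set msg) : Set msg := {X | synthP H X}

inductive guardP (invKey : ℕ → ℕ) (n : ℕ) (Ks : Set ℕ) : msg → Prop
  | No_Nonce : ∀ X, msg.Nonce n ∉ parts {X} → guardP invKey n Ks X
  | Guard : ∀ K X, invKey K ∈ Ks → guardP invKey n Ks (msg.Crypt K X)
  | Cry : ∀ K X, guardP invKey n Ks X → guardP invKey n Ks (msg.Crypt K X)
  | Pr : ∀ X Y, guardP invKey n Ks X → guardP invKey n Ks Y →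
      guardP invKey n Ks (msg.MPair X Y)

/-- `guard n Ks`: messages in which `Nonce n` is guarded by the keys of `Ks`. -/
def guardMsg (invKey : ℕ → ℕ) (n : ℕ) (Ks : Set ℕ) : Set msg := {X | guardP invKey n Ks X}

/-- `Guard n Ks H`: every message of `H` lies in `guard n Ks`. -/
def Guard (invKey : ℕ → ℕ) (n : ℕ) (Ks : Set ℕ) (H : Set msg) : Prop :=
  ∀ X ∈ H, X ∈ guardMsg invKey n Ks
inductive event : Type
  | Says : agent → agent → msg → event
deriving DecidableEq

def msgOf : event → msg
  | event.Says _ _ X => X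

/-- Set of messages sent in a trace. -/
def sent (evs : List event) : Set msg :=
  {X | ∃ A B, event.Says A B X ∈ evs}
/-- Private key of an agent: the inverse of its public key. -/
def priK (invKey : ℕ → ℕ) (pubK : agent → ℕ) (A : agent) : ℕ := invKey (pubK A)

/-- Initial knowledge of each agent in a public-key infrastructure:
every agent knows its own private key and all public keys; the spy moreover
knows the private keys of the bad agents. -/
def initStatePK (invKey : ℕ → ℕ) (pubK : agent → ℕ) (bad : Set agent) : agent → Set msg :=
  fun A =>
    match A with
    | agent.Spy =>
        {X | ∃ B ∈ bad, X = msg.Key (priK invKey pubK B)} ∪ {X | ∃ B, X = msg.Key (pubK B)}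
    | _ => {msg.Key (priK invKey pubK A)} ∪ {X | ∃ B, X = msg.Key (pubK B)}

/-- `spies evs`: the private keys of the bad agents, all public keys, and
every message sent in `evs`. -/
def spiesPK (invKey : ℕ → ℕ) (pubK : agent → ℕ) (bad : Set agent) (evs : List event) :
    Set msg :=
  initStatePK invKey pubK bad agent.Spy ∪ sent evs

/-- `used evs`: parts of all agents' initial knowledge and of all messages sent in `evs`. -/
def usedPK (invKey : ℕ → ℕ) (pubK : agent → ℕ) (bad : Set agent) (evs : List event) :
    Set msg :=
  parts ((⋃ A, initStatePK invKey pubK bad A) ∪ sent evs)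
/-- The empty encoded list: a fixed atomic message. -/
def nilm : msg := msg.Number 0

/-- Cons on encoded lists. -/
def consm (X L : msg) : msg := msg.MPair X L

/-- Head of an encoded list. -/
def headm : msg → msg
  | msg.MPair X _ => X
  | _ => nilm

/-- Tail of an encoded list. -/
def tailm : msg → msg
  | msg.MPair _ L => L
  | _ => nilm

/-- Length of an encoded list. -/
def lenm : msg → ℕ
  | msg.MPair _ L => lenm L + 1
  | _ => 0

/-- `ith L i` is the `i+1`-th element of `L`. -/
def ith : msg → ℕ → msg
  | L, 0 => headm L
  | L, i + 1 => ith (tailm L) i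

/-- `repl L i M` is `L` with its `i+1`-th element replaced by `M`. -/
def repl : msg → ℕ → msg → msg
  | msg.MPair _ L, 0, M => msg.MPair M L
  | msg.MPair X L, i + 1, M => msg.MPair X (repl L i M)
  | L, _, _ => L

/-- `insm L i M` is `L` with `M` inserted before the `i+1`-th element of `L`. -/
def insm : msg → ℕ → msg → msg
  | L, 0, M => msg.MPair M L
  | msg.MPair X L, i + 1, M => msg.MPair X (insm L i M)
  | L, _, _ => L

/-- `trunc L i` truncates the `i` first elements of `L`. -/
def trunc : msg → ℕ → msg
  | L, 0 => L
  | msg.MPair _ L, i + 1 => trunc L i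
  | L, _ => L
/-- `sign B X = ⟨Agent B, X, Crypt (priK B) (Hash X)⟩`. -/
def sign (invKey : ℕ → ℕ) (pubK : agent → ℕ) (B : agent) (X : msg) : msg :=
  msg.MPair (msg.Agent B) (msg.MPair X (msg.Crypt (invKey (pubK B)) (msg.Hash X)))

/-- The chaining relation of protocol P1. -/
def chain (invKey : ℕ → ℕ) (pubK : agent → ℕ) (B : agent) (ofr : ℕ) (A : agent)
    (L : msg) (C : agent) : msg :=
  sign invKey pubK B (msg.MPair (msg.Crypt (pubK A) (msg.Nonce ofr))
    (msg.Hash (msg.MPair (headm L) (msg.Agent C))))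

/-- The start of the chaining relation. -/
def anchor (invKey : ℕ → ℕ) (pubK : agent → ℕ) (A : agent) (n : ℕ) (B : agent) : msg :=
  chain invKey pubK A n A (consm nilm nilm) B

/-- The signer of an offer `chain B ofr A L C`, i.e. `Agent B`. -/
def shop (M : msg) : msg := headm M

/-- The designated next server of an offer `chain B ofr A L C`, i.e. `C`. -/
def next_shop : msg → agent
  | msg.MPair _ (msg.MPair (msg.MPair _ (msg.Hash (msg.MPair _ (msg.Agent C)))) _) => C
  | _ => agent.Server
/-- Messages encoding lists of agent names. -/
inductive aglP : msg → Prop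
  | Nil : aglP nilm
  | Cons : ∀ a I, aglP I → aglP (consm (msg.Agent a) I)

def agl : Set msg := {I | aglP I}

/-- Append of encoded lists. -/
def appm : msg → msg → msg
  | msg.MPair X L, I => msg.MPair X (appm L I)
  | _, I => I

/-- `delm a I` removes the first occurrence of `a` from the encoded list `I`. -/
def delm (a : msg) : msg → msg
  | msg.MPair X L => if X = a then L else msg.MPair X (delm a L)
  | L => L

/-- `isin a I` means that `a` occurs in the encoded list `I`. -/
def isin (a : msg) : msg → Prop
  | msg.MPair X L => X = a ∨ isin a L
  | _ => False

/-- The request message of P1. -/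
def reqm (invKey : ℕ → ℕ) (pubK : agent → ℕ) (A : agent) (r n : ℕ) (I : msg) (B : agent) :
    msg :=
  msg.MPair (msg.Agent A) (msg.MPair (msg.Number r)
    (msg.MPair (consm (msg.Agent A) (consm (msg.Agent B) I))
      (consm (anchor invKey pubK A n B) nilm)))

/-- The proposition message of P1. -/
def prom (invKey : ℕ → ℕ) (pubK : agent → ℕ) (B : agent) (ofr : ℕ) (A : agent) (r : ℕ)
    (I L J : msg) (C : agent) : msg :=
  msg.MPair (msg.Agent A) (msg.MPair (msg.Number r)
    (msg.MPair (appm J (delm (msg.Agent B) I))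
      (consm (chain invKey pubK B ofr A L C) L)))

/-- The request event of P1. -/
def req (invKey : ℕ → ℕ) (pubK : agent → ℕ) (A : agent) (r n : ℕ) (I : msg) (B : agent) :
    event :=
  event.Says A B (reqm invKey pubK A r n I B)

/-- The proposition event of P1. -/
def pro (invKey : ℕ → ℕ) (pubK : agent → ℕ) (B : agent) (ofr : ℕ) (A : agent) (r : ℕ)
    (I L J : msg) (C : agent) : event :=
  event.Says B C (prom invKey pubK B ofr A r I L J C)

/-- The protocol P1. -/
inductive p1 (invKey : ℕ → ℕ) (pubK : agent → ℕ) (bad : Set agent) : List event → Prop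
  | Nil : p1 invKey pubK bad []
  | Fake : ∀ evs B X, p1 invKey pubK bad evs →
      X ∈ synth (analz invKey (spiesPK invKey pubK bad evs)) →
      p1 invKey pubK bad (event.Says agent.Spy B X :: evs)
  | Req : ∀ evs A B r n I, p1 invKey pubK bad evs →
      msg.Nonce n ∉ usedPK invKey pubK bad evs → I ∈ agl →
      p1 invKey pubK bad (req invKey pubK A r n I B :: evs)
  | Prop : ∀ evs A A' B C r ofr I L J, p1 invKey pubK bad evs →
      I ∈ agl → J ∈ agl →
      event.Says A' B (msg.MPair (msg.Agent A)
        (msg.MPair (msg.Number r) (msg.MPair I L))) ∈ evs →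
      isin (msg.Agent C) (appm J (delm (msg.Agent B) I)) →
      msg.Nonce ofr ∉ usedPK invKey pubK bad evs →
      p1 invKey pubK bad (pro invKey pubK B ofr A r I L J C :: evs)

/-- Invariant: secrets (`Key K0`, nonces violating `P`) only occur under a key inverse to `K0`. -/
def gd (invKey : ℕ → ℕ) (P : ℕ → Prop) (K0 : ℕ) : msg → Prop
  | msg.Agent _ => True
  | msg.Number _ => True
  | msg.Nonce m => P m
  | msg.Key k => k ≠ K0
  | msg.Hash _ => True
  | msg.MPair X Y => gd invKey P K0 X ∧ gd invKey P K0 Y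
  | msg.Crypt K X => invKey K = K0 ∨ gd invKey P K0 X

theorem gd_analz {invKey : ℕ → ℕ} {P : ℕ → Prop} {K0 : ℕ} {H : Set msg}
    (hH : ∀ X ∈ H, gd invKey P K0 X) {X : msg} (h : analzP invKey H X) :
    gd invKey P K0 X := by
  induction h with
  | Inj X h => exact hH X h
  | Fst X Y _ ih => exact ih.1
  | Snd X Y _ ih => exact ih.2
  | Decrypt K X _ _ ih1 ih2 =>
    rcases ih1 with h | h
    · exact absurd h ih2
    · exact h

theorem gd_synth {invKey : ℕ → ℕ} {P : ℕ → Prop} {K0 : ℕ} {H : Set msg}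
    (hH : ∀ X ∈ H, gd invKey P K0 X) {X : msg} (h : synthP H X) :
    gd invKey P K0 X := by
  induction h with
  | Inj X h => exact hH X h
  | Ag a => trivial
  | Num n => trivial
  | Hsh X _ _ => trivial
  | Pr X Y _ _ ih1 ih2 => exact ⟨ih1, ih2⟩
  | Cry K X _ _ ih => exact Or.inr ih

theorem gd_agl {invKey : ℕ → ℕ} {P : ℕ → Prop} {K0 : ℕ} {I : msg} (h : I ∈ agl) :
    gd invKey P K0 I := by
  have h' : aglP I := h
  clear h
  induction h' with
  | Nil => trivial
  | Cons a I _ ih => exact ⟨trivial, ih⟩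

theorem gd_appm {invKey : ℕ → ℕ} {P : ℕ → Prop} {K0 : ℕ} (J I : msg)
    (hJ : gd invKey P K0 J) (hI : gd invKey P K0 I) : gd invKey P K0 (appm J I) := by
  induction J with
  | MPair X L _ ih => exact ⟨hJ.1, ih hJ.2⟩
  | _ => exact hI

theorem gd_delm {invKey : ℕ → ℕ} {P : ℕ → Prop} {K0 : ℕ} (a I : msg)
    (hI : gd invKey P K0 I) : gd invKey P K0 (delm a I) := by
  induction I with
  | MPair X L _ ih =>
    rw [delm]
    split
    · exact hI.2
    · exact ⟨hI.1, ih hI.2⟩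
  | _ => exact hI

theorem gd_chain {invKey : ℕ → ℕ} {pubK : agent → ℕ} {P : ℕ → Prop} {K0 : ℕ}
    {B : agent} {ofr : ℕ} {A : agent} {L : msg} {C : agent}
    (h : invKey (pubK A) = K0 ∨ P ofr) :
    gd invKey P K0 (chain invKey pubK B ofr A L C) :=
  ⟨trivial, ⟨h, trivial⟩, Or.inr trivial⟩

theorem gd_reqm {invKey : ℕ → ℕ} {pubK : agent → ℕ} {P : ℕ → Prop} {K0 : ℕ}
    {A : agent} {r n : ℕ} {I : msg} {B : agent} (hI : I ∈ agl)
    (h : invKey (pubK A) = K0 ∨ P n) :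
    gd invKey P K0 (reqm invKey pubK A r n I B) :=
  ⟨trivial, trivial, ⟨trivial, trivial, gd_agl hI⟩, gd_chain h, trivial⟩

theorem gd_prom {invKey : ℕ → ℕ} {pubK : agent → ℕ} {P : ℕ → Prop} {K0 : ℕ}
    {A : agent} {r n : ℕ} {I L J : msg} {B C : agent} (hI : I ∈ agl) (hJ : J ∈ agl)
    (hL : gd invKey P K0 L) (h : invKey (pubK A) = K0 ∨ P n) :
    gd invKey P K0 (prom invKey pubK B n A r I L J C) :=
  ⟨trivial, trivial, gd_appm _ _ (gd_agl hJ) (gd_delm _ _ (gd_agl hI)), gd_chain h, hL⟩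

theorem parts_cut {H : Set msg} {X Y : msg} (hX : partsP H X) (h : partsP {X} Y) :
    partsP H Y := by
  induction h with
  | Inj Z h => rw [Set.mem_singleton_iff.1 h]; exact hX
  | Fst _ _ _ ih => exact partsP.Fst _ _ ih
  | Snd _ _ _ ih => exact partsP.Snd _ _ ih
  | Body _ _ _ ih => exact partsP.Body _ _ ih

theorem gd_fresh {invKey : ℕ → ℕ} {K0 n : ℕ} {H : Set msg} (hn : ¬ partsP H (msg.Nonce n))
    (X : msg) (hX : partsP H X) (h : gd invKey (fun _ => True) K0 X) :
    gd invKey (fun m => m ≠ n) K0 X := by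
  induction X with
  | Nonce m => rintro rfl; exact hn hX
  | MPair X Y ih1 ih2 =>
    exact ⟨ih1 (partsP.Fst _ _ hX) h.1, ih2 (partsP.Snd _ _ hX) h.2⟩
  | Crypt K X ih => exact h.imp id (ih (partsP.Body _ _ hX))
  | _ => exact h

theorem gd_spies {invKey : ℕ → ℕ} {pubK : agent → ℕ} {bad : Set agent}
    (hpri : Function.Injective (priK invKey pubK))
    (hpubpri : ∀ A B : agent, pubK A ≠ priK invKey pubK B)
    {A : agent} (hA : A ∉ bad) {P : ℕ → Prop} {evs : List event}
    (h : ∀ X ∈ sent evs, gd invKey P (priK invKey pubK A) X) :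
    ∀ X ∈ spiesPK invKey pubK bad evs, gd invKey P (priK invKey pubK A) X := by
  rintro X ((⟨B, hB, rfl⟩ | ⟨B, rfl⟩) | hX)
  · intro e
    exact hA (hpri e ▸ hB)
  · exact hpubpri B A
  · exact h X hX

theorem sent_cons {Q : msg → Prop} {A B : agent} {X : msg} {evs : List event}
    (hX : Q X) (h : ∀ Y ∈ sent evs, Q Y) : ∀ Y ∈ sent (event.Says A B X :: evs), Q Y := by
  rintro Y ⟨A', B', hm⟩
  rcases List.mem_cons.1 hm with e | hm
  · cases e; exact hX
  · exact h Y ⟨A', B', hm⟩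

theorem gd_keys {invKey : ℕ → ℕ} {pubK : agent → ℕ} {bad : Set agent}
    (hpri : Function.Injective (priK invKey pubK))
    (hpubpri : ∀ A B : agent, pubK A ≠ priK invKey pubK B)
    {A : agent} (hA : A ∉ bad) {evs : List event} (hevs : p1 invKey pubK bad evs) :
    ∀ X ∈ sent evs, gd invKey (fun _ => True) (priK invKey pubK A) X := by
  induction hevs with
  | Nil => rintro X ⟨_, _, h⟩; cases h
  | Fake evs B X _ hX ih =>
    exact sent_cons
      (gd_synth (fun Y hY => gd_analz (gd_spies hpri hpubpri hA ih) hY) hX) ih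
  | Req evs A' B r n I _ _ hI ih => exact sent_cons (gd_reqm hI (Or.inr trivial)) ih
  | _ =>
    rename_i evs A1 A' B C r ofr I L J h1 hI hJ hs h2 h3 ih
    exact sent_cons (gd_prom hI hJ (ih _ ⟨_, _, hs⟩).2.2.2 (Or.inr trivial)) ih

theorem used_req {invKey : ℕ → ℕ} {pubK : agent → ℕ} {bad : Set agent} {evs : List event}
    {A B : agent} {r n : ℕ} {I : msg} (h : req invKey pubK A r n I B ∈ evs) :
    msg.Nonce n ∈ usedPK invKey pubK bad evs := by
  have h0 : partsP ((⋃ A, initStatePK invKey pubK bad A) ∪ sent evs)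
      (reqm invKey pubK A r n I B) := partsP.Inj _ (Or.inr ⟨_, _, h⟩)
  exact partsP.Body _ _ (partsP.Fst _ _ (partsP.Fst _ _ (partsP.Snd _ _ (partsP.Fst _ _
    (partsP.Snd _ _ (partsP.Snd _ _ (partsP.Snd _ _ h0)))))))

theorem gd_main {invKey : ℕ → ℕ} {pubK : agent → ℕ} {bad : Set agent}
    (hpri : Function.Injective (priK invKey pubK))
    (hpubpri : ∀ A B : agent, pubK A ≠ priK invKey pubK B)
    (hspy : agent.Spy ∈ bad)
    {A B : agent} {r n : ℕ} {I : msg} (hA : A ∉ bad) {evs : List event}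
    (hevs : p1 invKey pubK bad evs) (hreq : req invKey pubK A r n I B ∈ evs) :
    ∀ X ∈ sent evs, gd invKey (fun m => m ≠ n) (priK invKey pubK A) X := by
  have fresh : ∀ evs, p1 invKey pubK bad evs → msg.Nonce n ∉ usedPK invKey pubK bad evs →
      ∀ X ∈ sent evs, gd invKey (fun m => m ≠ n) (priK invKey pubK A) X :=
    fun evs h hn X hX => gd_fresh hn X (partsP.Inj _ (Or.inr hX))
      (gd_keys hpri hpubpri hA h X hX)
  induction hevs with
  | Nil => cases hreq
  | Fake evs B' X _ hX ih =>
    rcases List.mem_cons.1 hreq with e | hm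
    · injection e with e1
      exact absurd (e1 ▸ hspy) hA
    · exact sent_cons
        (gd_synth (fun Y hY => gd_analz (gd_spies hpri hpubpri hA (ih hm)) hY) hX) (ih hm)
  | Req evs A' B' r' n' I' hp hn hI ih =>
    rcases List.mem_cons.1 hreq with e | hm
    · simp only [req, reqm, anchor, chain, sign, consm, event.Says.injEq, msg.MPair.injEq,
        msg.Crypt.injEq, msg.Nonce.injEq, msg.Agent.injEq] at e
      obtain ⟨rfl, rfl⟩ : A = A' ∧ n = n' := by tauto
      exact sent_cons (gd_reqm hI (Or.inl rfl)) (fresh _ hp hn)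
    · refine sent_cons (gd_reqm hI (Or.inr ?_)) (ih hm)
      rintro rfl
      exact hn (used_req hm)
  | _ =>
    rename_i evs A1 A' B' C r' ofr I' L J hp hI hJ hs h2 hn ih
    rcases List.mem_cons.1 hreq with e | hm
    · simp only [req, pro, prom, reqm, anchor, chain, sign, consm, event.Says.injEq,
        msg.MPair.injEq, msg.Crypt.injEq, msg.Nonce.injEq, msg.Agent.injEq] at e
      obtain ⟨rfl, rfl⟩ : A = A1 ∧ n = ofr := by tauto
      have hf := fresh _ hp hn
      exact sent_cons (gd_prom hI hJ (hf _ ⟨_, _, hs⟩).2.2.2 (Or.inl rfl)) hf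
    · refine sent_cons (gd_prom hI hJ (ih hm _ ⟨_, _, hs⟩).2.2.2 (Or.inr ?_)) (ih hm)
      rintro rfl
      exact hn (used_req hm)

/-- Confidentiality of the request in P1 (`req_notin_spies`): the spy cannot
obtain the session identifier `n` of an honest owner's agent. -/
theorem req_notin_spies
    (invKey : ℕ → ℕ) (pubK : agent → ℕ) (bad : Set agent)
    (hinv : ∀ K, invKey (invKey K) = K)
    (hpub : Function.Injective pubK)
    (hpri : Function.Injective (priK invKey pubK))
    (hpubpri : ∀ A B : agent, pubK A ≠ priK invKey pubK B)
    (hspy : agent.Spy ∈ bad)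
    (evs : List event) (A B : agent) (r n : ℕ) (I : msg)
    (hevs : p1 invKey pubK bad evs)
    (hreq : req invKey pubK A r n I B ∈ evs)
    (hA : A ∉ bad) :
    msg.Nonce n ∉ analz invKey (spiesPK invKey pubK bad evs) := by
  intro h
  exact gd_analz (gd_spies hpri hpubpri hA (gd_main hpri hpubpri hspy hA hevs hreq)) h rfl
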